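/- arXiv:1403.5926 — 5 statements merged into one kernel-verified Lean document; each statement's English description precedes it below -/
import Mathlib

section
/- Let n ≥ 1 and let A be an n×n complex Hermitian positive semidefinite matrix, and let β > 0 be a real number. Then det(A + β·I), which is a nonnegative real number, satisfies det(A + β·I) ≥ Σ_{k=0}^{n} β^k · (det A)^{(n-k)/n}, where det A is the (nonnegative real) determinant of A and the fractional powers are real powers. -/
open ComplexOrder

/-!
Superadditivity of the geometric mean (Mahler's inequality), applied to the eigenvalues of `A` and
to the constant family `β`, gives `det (A + β • 1) ≥ ((det A) ^ (1 / n) + β) ^ n`. Expand the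
right-hand side by the binomial theorem and bound every binomial coefficient below by `1`.
-/

section GeometricMean

variable {ι : Type*} {s : Finset ι} {w : ι → ℝ}

lemma prod_rpow_le_sum_mul_div_mul_prod_rpow {x y : ι → ℝ} (hw : ∀ i ∈ s, 0 ≤ w i)
    (hw_sum : ∑ i ∈ s, w i = 1) (hx : ∀ i ∈ s, 0 ≤ x i) (hxy : ∀ i ∈ s, x i ≤ y i) :
    ∏ i ∈ s, x i ^ w i ≤ (∑ i ∈ s, w i * (x i / y i)) * ∏ i ∈ s, y i ^ w i := by
  have hy : ∀ i ∈ s, 0 ≤ y i := fun i hi ↦ (hx i hi).trans (hxy i hi)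
  have hdiv : ∀ i ∈ s, 0 ≤ x i / y i := fun i hi ↦ div_nonneg (hx i hi) (hy i hi)
  -- If `y i = 0`, then `x i = 0` as well, so the junk value of `x i / y i` does no harm.
  have hmul : ∀ i ∈ s, x i / y i * y i = x i := fun i hi ↦
    div_mul_cancel_of_imp fun h ↦ le_antisymm (h ▸ hxy i hi) (hx i hi)
  calc ∏ i ∈ s, x i ^ w i
      = (∏ i ∈ s, (x i / y i) ^ w i) * ∏ i ∈ s, y i ^ w i := by
        rw [← Finset.prod_mul_distrib]
        refine Finset.prod_congr rfl fun i hi ↦ ?_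
        rw [← Real.mul_rpow (hdiv i hi) (hy i hi), hmul i hi]
    _ ≤ (∑ i ∈ s, w i * (x i / y i)) * ∏ i ∈ s, y i ^ w i := by
        gcongr
        · exact Finset.prod_nonneg fun i hi ↦ Real.rpow_nonneg (hy i hi) _
        · exact Real.geom_mean_le_arith_mean_weighted s w _ hw hw_sum hdiv

lemma prod_rpow_add_prod_rpow_le_prod_add_rpow {x y : ι → ℝ} (hw : ∀ i ∈ s, 0 ≤ w i)
    (hw_sum : ∑ i ∈ s, w i = 1) (hx : ∀ i ∈ s, 0 ≤ x i) (hy : ∀ i ∈ s, 0 ≤ y i) :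
    ∏ i ∈ s, x i ^ w i + ∏ i ∈ s, y i ^ w i ≤ ∏ i ∈ s, (x i + y i) ^ w i := by
  have hprod : 0 ≤ ∏ i ∈ s, (x i + y i) ^ w i :=
    Finset.prod_nonneg fun i hi ↦ Real.rpow_nonneg (add_nonneg (hx i hi) (hy i hi)) _
  have hsum : ∑ i ∈ s, w i * (x i / (x i + y i)) + ∑ i ∈ s, w i * (y i / (x i + y i)) ≤ 1 := by
    rw [← Finset.sum_add_distrib, ← hw_sum]
    refine Finset.sum_le_sum fun i hi ↦ ?_
    rw [← mul_add, ← add_div]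
    exact mul_le_of_le_one_right (hw i hi) (div_self_le_one _)
  calc ∏ i ∈ s, x i ^ w i + ∏ i ∈ s, y i ^ w i
      ≤ (∑ i ∈ s, w i * (x i / (x i + y i))) * ∏ i ∈ s, (x i + y i) ^ w i +
          (∑ i ∈ s, w i * (y i / (x i + y i))) * ∏ i ∈ s, (x i + y i) ^ w i :=
        add_le_add
          (prod_rpow_le_sum_mul_div_mul_prod_rpow hw hw_sum hx
            fun i hi ↦ le_add_of_nonneg_right (hy i hi))
          (prod_rpow_le_sum_mul_div_mul_prod_rpow hw hw_sum hy
            fun i hi ↦ le_add_of_nonneg_left (hx i hi))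
    _ ≤ ∏ i ∈ s, (x i + y i) ^ w i := by
        rw [← add_mul]
        exact mul_le_of_le_one_left hprod hsum

lemma prod_rpow_inv_card_add_pow_card_le_prod_add {x : ι → ℝ} {c : ℝ} (hs : s.Nonempty)
    (hx : ∀ i ∈ s, 0 ≤ x i) (hc : 0 ≤ c) :
    ((∏ i ∈ s, x i) ^ (s.card : ℝ)⁻¹ + c) ^ s.card ≤ ∏ i ∈ s, (x i + c) := by
  have hcard : s.card ≠ 0 := hs.card_ne_zero
  have hxc : ∀ i ∈ s, 0 ≤ x i + c := fun i hi ↦ add_nonneg (hx i hi) hc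
  have hprod : 0 ≤ ∏ i ∈ s, x i := Finset.prod_nonneg hx
  have hmean : (∏ i ∈ s, x i) ^ (s.card : ℝ)⁻¹ + c ≤ (∏ i ∈ s, (x i + c)) ^ (s.card : ℝ)⁻¹ := by
    have h := prod_rpow_add_prod_rpow_le_prod_add_rpow (w := fun _ ↦ (s.card : ℝ)⁻¹)
      (fun _ _ ↦ by positivity) (by simp [hcard]) hx (fun _ _ ↦ hc)
    rwa [Real.finsetProd_rpow s _ hx, Real.finsetProd_rpow s _ hxc, Finset.prod_const,
      Real.rpow_inv_natCast_pow hc hcard] at h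
  calc ((∏ i ∈ s, x i) ^ (s.card : ℝ)⁻¹ + c) ^ s.card
      ≤ ((∏ i ∈ s, (x i + c)) ^ (s.card : ℝ)⁻¹) ^ s.card := by gcongr
    _ = ∏ i ∈ s, (x i + c) := Real.rpow_inv_natCast_pow (Finset.prod_nonneg hxc) hcard

end GeometricMean

lemma sum_pow_mul_pow_le_add_pow {R : Type*} [CommSemiring R] [PartialOrder R] [IsOrderedRing R]
    {x y : R} (hx : 0 ≤ x) (hy : 0 ≤ y) (n : ℕ) :
    ∑ k ∈ Finset.range (n + 1), x ^ k * y ^ (n - k) ≤ (x + y) ^ n := by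
  rw [add_pow]
  refine Finset.sum_le_sum fun k hk ↦ ?_
  have hchoose : (1 : R) ≤ n.choose k := by
    simpa only [Nat.cast_one] using
      Nat.mono_cast (α := R) (Nat.choose_pos (Finset.mem_range_succ_iff.mp hk))
  exact le_mul_of_one_le_right (by positivity) hchoose

lemma rpow_sub_div_eq_rpow_inv_pow {x : ℝ} (hx : 0 ≤ x) {k n : ℕ} (hk : k ≤ n) :
    x ^ (((n : ℝ) - k) / n) = (x ^ (n : ℝ)⁻¹) ^ (n - k) := by
  rw [← Real.rpow_mul_natCast hx, Nat.cast_sub hk, div_eq_inv_mul]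

section Determinant

variable {m 𝕜 : Type*} [Fintype m] [DecidableEq m] [RCLike 𝕜] {A : Matrix m m 𝕜}

lemma det_add_smul_one_eq_prod_eigenvalues_add (hA : A.IsHermitian) (c : 𝕜) :
    (A + c • (1 : Matrix m m 𝕜)).det = ∏ i, ((hA.eigenvalues i : 𝕜) + c) := by
  have hdiag : A + c • (1 : Matrix m m 𝕜) = Unitary.conjStarAlgAut 𝕜 _ hA.eigenvectorUnitary
      (Matrix.diagonal fun i ↦ (hA.eigenvalues i : 𝕜) + c) := by
    conv_lhs => rw [hA.spectral_theorem]
    rw [← Matrix.diagonal_add, ← Matrix.smul_one_eq_diagonal, map_add, map_smul, map_one]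
    rfl
  rw [hdiag, Unitary.conjStarAlgAut_apply, Matrix.det_mul_right_comm]
  simp

lemma re_det_rpow_inv_card_add_pow_card_le [Nonempty m] (hA : A.PosSemidef) {β : ℝ} (hβ : 0 ≤ β) :
    (RCLike.re A.det ^ (Fintype.card m : ℝ)⁻¹ + β) ^ Fintype.card m ≤
      RCLike.re (A + (β : 𝕜) • (1 : Matrix m m 𝕜)).det := by
  rw [hA.isHermitian.det_eq_prod_eigenvalues,
    det_add_smul_one_eq_prod_eigenvalues_add hA.isHermitian]
  norm_cast
  exact prod_rpow_inv_card_add_pow_card_le_prod_add Finset.univ_nonempty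
    (fun i _ ↦ hA.eigenvalues_nonneg i) hβ

theorem det_add_smul_one_ge_sum_rpow_general [Nonempty m] (hA : A.PosSemidef) {β : ℝ}
    (hβ : 0 ≤ β) :
    ∑ k ∈ Finset.range (Fintype.card m + 1),
        β ^ k * RCLike.re A.det ^ (((Fintype.card m : ℝ) - k) / Fintype.card m)
      ≤ RCLike.re (A + (β : 𝕜) • (1 : Matrix m m 𝕜)).det := by
  have hdet : 0 ≤ RCLike.re A.det := (RCLike.nonneg_iff.mp hA.det_nonneg).1
  calc ∑ k ∈ Finset.range (Fintype.card m + 1),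
        β ^ k * RCLike.re A.det ^ (((Fintype.card m : ℝ) - k) / Fintype.card m)
      = ∑ k ∈ Finset.range (Fintype.card m + 1),
          β ^ k * (RCLike.re A.det ^ (Fintype.card m : ℝ)⁻¹) ^ (Fintype.card m - k) :=
        Finset.sum_congr rfl fun k hk ↦ by
          rw [rpow_sub_div_eq_rpow_inv_pow hdet (Finset.mem_range_succ_iff.mp hk)]
    _ ≤ (β + RCLike.re A.det ^ (Fintype.card m : ℝ)⁻¹) ^ Fintype.card m :=
        sum_pow_mul_pow_le_add_pow hβ (Real.rpow_nonneg hdet _) _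
    _ = (RCLike.re A.det ^ (Fintype.card m : ℝ)⁻¹ + β) ^ Fintype.card m := by rw [add_comm]
    _ ≤ RCLike.re (A + (β : 𝕜) • (1 : Matrix m m 𝕜)).det :=
        re_det_rpow_inv_card_add_pow_card_le hA hβ

end Determinant

/-- Lemma 3.5: for an `n × n` complex Hermitian positive semidefinite matrix `A`
and `β > 0`, the (real, nonnegative) determinant of `A + β • I` satisfies
`det (A + β • I) ≥ ∑_{k=0}^{n} β^k (det A)^{(n-k)/n}`. -/
theorem det_add_smul_one_ge_sum_rpow (n : ℕ) (hn : 1 ≤ n)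
    (A : Matrix (Fin n) (Fin n) ℂ) (hA : A.PosSemidef) (β : ℝ) (hβ : 0 < β) :
    ∑ k ∈ Finset.range (n + 1), β ^ k * (A.det.re) ^ (((n : ℝ) - k) / n)
      ≤ (A + (β : ℂ) • (1 : Matrix (Fin n) (Fin n) ℂ)).det.re := by
  have : Nonempty (Fin n) := ⟨⟨0, hn⟩⟩
  simpa using det_add_smul_one_ge_sum_rpow_general hA hβ.le
end

section
/- Let n ≥ 1, let 0 ≤ λ₁ ≤ λ₂ ≤ ⋯ ≤ λₙ be real numbers, and let β ≥ 0. Then ∏_{j=1}^{n} (λ_j + β) ≥ Σ_{k=0}^{n} β^k · ∏_{j=k+1}^{n} λ_j, where the product over the empty index range (k = n) equals 1. -/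
/-!
Expanding `∏ (f i + g i)` according to the largest index at which `g` is chosen gives
`∏ f + ∑ i, g i * ∏ j < i, (f j + g j) * ∏ j > i, f j`; for nonnegative `f` the middle product is at
least `∏ j < i, g j`, and a constant `g = β` turns the prefix products into powers of `β`.
-/

theorem prod_add_sum_mul_prod_lt_mul_prod_gt_le_prod_add {ι R : Type*} [LinearOrder ι]
    [CommSemiring R] [PartialOrder R] [IsOrderedRing R] {s : Finset ι} {f g : ι → R}
    (hf : ∀ i ∈ s, 0 ≤ f i) (hg : ∀ i ∈ s, 0 ≤ g i) :
    ∏ i ∈ s, f i + ∑ i ∈ s, g i * (∏ j ∈ s with j < i, g j) * ∏ j ∈ s with i < j, f j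
      ≤ ∏ i ∈ s, (f i + g i) := by
  rw [Finset.prod_add_ordered]
  gcongr with i hi j hj
  · exact Finset.prod_nonneg fun j hj => hf j (Finset.mem_of_mem_filter j hj)
  · exact hg i hi
  · exact fun j hj => hg j (Finset.mem_of_mem_filter j hj)
  · exact le_add_of_nonneg_left (hf j (Finset.mem_of_mem_filter j hj))

theorem prod_add_ge_sum_pow_mul_prod_tail_general {R : Type*} [CommSemiring R] [PartialOrder R]
    [IsOrderedRing R] {n : ℕ} {lam : Fin n → R} (hnonneg : ∀ j, 0 ≤ lam j) {β : R} (hβ : 0 ≤ β) :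
    ∑ k ∈ Finset.range (n + 1),
        β ^ k * ∏ j ∈ Finset.univ.filter (fun j : Fin n => k ≤ (j : ℕ)), lam j
      ≤ ∏ j, (lam j + β) :=
  calc
    _ = ∏ j, lam j + ∑ i : Fin n, β ^ ((i : ℕ) + 1) * ∏ j with i < j, lam j := by
        simp [Finset.sum_range_succ', Finset.sum_range, add_comm]
    _ = ∏ j, lam j + ∑ i : Fin n, β * (∏ j : Fin n with j < i, β) * ∏ j with i < j, lam j := by
        simp only [Finset.prod_const, Finset.filter_gt_eq_Iio, Fin.card_Iio, pow_succ']
    _ ≤ ∏ j, (lam j + β) :=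
        prod_add_sum_mul_prod_lt_mul_prod_gt_le_prod_add (fun j _ => hnonneg j) fun _ _ => hβ

/-- Eigenvalue inequality underlying Lemma 3.5: for `0 ≤ λ₁ ≤ ⋯ ≤ λₙ` and `β ≥ 0`,
`∏_{j=1}^n (λ_j + β) ≥ ∑_{k=0}^n β^k ∏_{j=k+1}^n λ_j`. -/
theorem prod_add_ge_sum_pow_mul_prod_tail (n : ℕ) (hn : 1 ≤ n)
    (lam : Fin n → ℝ) (hmono : Monotone lam) (hnonneg : ∀ j, 0 ≤ lam j)
    (β : ℝ) (hβ : 0 ≤ β) :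
    ∑ k ∈ Finset.range (n + 1),
        β ^ k * ∏ j ∈ Finset.univ.filter (fun j : Fin n => k ≤ (j : ℕ)), lam j
      ≤ ∏ j, (lam j + β) :=
  prod_add_ge_sum_pow_mul_prod_tail_general hnonneg hβ
end

section
/- Let f : [1,∞) → [1,∞) be continuous and monotonically increasing with ∫_t^∞ da/(a·f(a)) < ∞ for every t ≥ 1, and assume that t ↦ f(t)/t^{1/2} is antitone (decreasing) on [1,∞). Then for every t ≥ 1 one has f(t) · ∫_t^∞ da/(a·f(a)) ≥ 2; equivalently, with g(t) := (∫_t^∞ da/(a·f(a)))^{-1}, one has g(t)/f(t) ≤ 1/2. -/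
open MeasureTheory

/-! The hypothesis bounds `f a` by `f t * (a / t) ^ s` for `a > t`, so that `f t / (a * f a)` is at
least `t ^ s * a ^ (-s - 1)`, whose integral over `(t, ∞)` is `1 / s`. The constant is attained
by `f a = a ^ s`. -/

lemma integral_Ioi_rpow_neg_sub_one {s t : ℝ} (hs : 0 < s) (ht : 0 < t) :
    ∫ a in Set.Ioi t, a ^ (-s - 1) = t ^ (-s) / s := by
  rw [integral_Ioi_rpow_of_lt (by linarith) ht, sub_add_cancel, neg_div_neg_eq]

lemma rpow_mul_rpow_neg_sub_one_le_of_div_rpow_le {s t a x y : ℝ} (ht : 0 < t) (ha : 0 < a)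
    (hx : 0 < x) (hxy : x / a ^ s ≤ y / t ^ s) :
    t ^ s * a ^ (-s - 1) ≤ y * (1 / (a * x)) := by
  have hts : 0 < t ^ s := Real.rpow_pos_of_pos ht s
  have has : 0 < a ^ s := Real.rpow_pos_of_pos ha s
  have cross_mul : x * t ^ s ≤ y * a ^ s := (div_le_div_iff₀ has hts).mp hxy
  calc t ^ s * a ^ (-s - 1) = (x * t ^ s) / (a ^ s * (a * x)) := by
        rw [Real.rpow_sub_one ha.ne', Real.rpow_neg ha.le]
        field_simp
    _ ≤ (y * a ^ s) / (a ^ s * (a * x)) := by gcongr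
    _ = y * (1 / (a * x)) := by field_simp

theorem two_le_mul_tail_integral_general {f : ℝ → ℝ} {s t : ℝ} (hs : 0 < s) (ht : 0 < t)
    (hf_pos : ∀ a > t, 0 < f a)
    (hf_int : IntegrableOn (fun a => 1 / (a * f a)) (Set.Ioi t))
    (hf_le : ∀ a > t, f a / a ^ s ≤ f t / t ^ s) :
    s⁻¹ ≤ f t * ∫ a in Set.Ioi t, 1 / (a * f a) := by
  have power_int : IntegrableOn (fun a : ℝ => a ^ (-s - 1)) (Set.Ioi t) :=
    integrableOn_Ioi_rpow_of_lt (by linarith) ht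
  calc s⁻¹ = t ^ s * ∫ a in Set.Ioi t, a ^ (-s - 1) := by
        have hts : t ^ s ≠ 0 := (Real.rpow_pos_of_pos ht s).ne'
        rw [integral_Ioi_rpow_neg_sub_one hs ht, Real.rpow_neg ht.le]
        field_simp
    _ = ∫ a in Set.Ioi t, t ^ s * a ^ (-s - 1) := (integral_const_mul _ _).symm
    _ ≤ ∫ a in Set.Ioi t, f t * (1 / (a * f a)) :=
        setIntegral_mono_on (power_int.const_mul _) (hf_int.const_mul _) measurableSet_Ioi
          fun a hta => rpow_mul_rpow_neg_sub_one_le_of_div_rpow_le ht (ht.trans hta)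
            (hf_pos a hta) (hf_le a hta)
    _ = f t * ∫ a in Set.Ioi t, 1 / (a * f a) := integral_const_mul _ _

/-- If `f : [1,∞) → [1,∞)` is continuous, increasing, has finite tail integrals and
`f(t)/t^{1/2}` is decreasing, then `f(t) · ∫_t^∞ da/(a f(a)) ≥ 2` for every `t ≥ 1`. -/
theorem two_le_mul_tail_integral (f : ℝ → ℝ)
    (hf_cont : ContinuousOn f (Set.Ici 1))
    (hf_mono : MonotoneOn f (Set.Ici 1))
    (hf_ge : ∀ t ≥ (1 : ℝ), 1 ≤ f t)
    (hf_int : ∀ t ≥ (1 : ℝ), IntegrableOn (fun a => 1 / (a * f a)) (Set.Ioi t))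
    (hf_anti : AntitoneOn (fun t => f t / t ^ ((1 : ℝ) / 2)) (Set.Ici 1)) :
    ∀ t ≥ (1 : ℝ), 2 ≤ f t * ∫ a in Set.Ioi t, 1 / (a * f a) := by
  intro t ht
  have hge (a : ℝ) (hta : t < a) : 1 ≤ a := ht.trans hta.le
  simpa only [one_div, inv_inv] using two_le_mul_tail_integral_general one_half_pos
    (one_pos.trans_le ht) (fun a hta => one_pos.trans_le (hf_ge a (hge a hta))) (hf_int t ht)
    fun a hta => hf_anti ht (hge a hta) hta.le
end

section
/- Let f : [1,∞) → [1,∞) be continuous and monotonically increasing with ∫_t^∞ da/(a·f(a)) < ∞ for every t ≥ 1, assume that t ↦ f(t)/t^{1/2} is antitone (decreasing) on [1,∞), and define g(t) := (∫_t^∞ da/(a·f(a)))^{-1}. Then the function t ↦ g(t)/t^{1/2} is antitone (decreasing) on (1,∞). -/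
open MeasureTheory

/-!
Since `da / a` is invariant under scaling,
`t ^ p * ∫_t^∞ φ(a) da / a = ∫_1^∞ t ^ p * φ(t u) du / u`.
If `t ^ p * φ(t)` is increasing, so is the right-hand integrand as a function of `t`, for each fixed
`u`. Taking `φ = 1 / f` and inverting yields the claim, with no need to differentiate `g`.
-/

open Set

theorem inv_smul_comp_mul_left {G₀ α : Type*} [CommGroupWithZero G₀] [MulAction G₀ α] (φ : G₀ → α)
    {b : G₀} (hb : b ≠ 0) (x : G₀) :
    x⁻¹ • φ (b * x) = b • ((b * x)⁻¹ • φ (b * x)) := by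
  rw [smul_smul, mul_inv, mul_inv_cancel_left₀ hb]

section Scaling

variable {E : Type*} [NormedAddCommGroup E] [NormedSpace ℝ E] {b : ℝ}

theorem integral_inv_smul_comp_mul_left_Ioi (φ : ℝ → E) (c : ℝ) (hb : 0 < b) :
    ∫ x in Ioi c, x⁻¹ • φ (b * x) = ∫ x in Ioi (b * c), x⁻¹ • φ x := by
  simp_rw [inv_smul_comp_mul_left φ hb.ne']
  rw [integral_smul, integral_comp_mul_left_Ioi (fun x => x⁻¹ • φ x) c hb, smul_inv_smul₀ hb.ne']

theorem integrableOn_Ioi_inv_smul_comp_mul_left_iff (φ : ℝ → E) (c : ℝ) (hb : 0 < b) :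
    IntegrableOn (fun x => x⁻¹ • φ (b * x)) (Ioi c) ↔
      IntegrableOn (fun x => x⁻¹ • φ x) (Ioi (b * c)) := by
  simp_rw [inv_smul_comp_mul_left φ hb.ne']
  rw [← integrableOn_Ioi_comp_mul_left_iff _ c hb]
  exact integrable_fun_smul_iff hb.ne' _

end Scaling

theorem setIntegral_pos_of_forall_pos {α : Type*} [MeasurableSpace α] {μ : Measure α} {s : Set α}
    {h : α → ℝ} (hs : MeasurableSet s) (hμs : μ s ≠ 0) (h_int : IntegrableOn h s μ)
    (h_pos : ∀ a ∈ s, 0 < h a) : 0 < ∫ a in s, h a ∂μ := by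
  have support_inter : Function.support h ∩ s = s :=
    inter_eq_right.2 fun a ha => (h_pos a ha).ne'
  have h_nonneg : 0 ≤ᵐ[μ.restrict s] h :=
    ae_restrict_of_forall_mem hs fun a ha => (h_pos a ha).le
  rwa [setIntegral_pos_iff_support_of_nonneg_ae h_nonneg h_int, support_inter, pos_iff_ne_zero]

section Tail

variable {c p : ℝ}

theorem rpow_mul_comp_mul_right_le {φ : ℝ → ℝ} (hc : 0 < c)
    (hφ_mono : MonotoneOn (fun t => t ^ p * φ t) (Ioi c)) {s t u : ℝ} (hs : c ≤ s) (hst : s ≤ t)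
    (hu : 1 < u) : s ^ p * φ (s * u) ≤ t ^ p * φ (t * u) := by
  have hs0 : 0 < s := hc.trans_le hs
  have ht0 : 0 < t := hs0.trans_le hst
  have hu0 : 0 < u := one_pos.trans hu
  have hsu : c < s * u := hs.trans_lt (lt_mul_of_one_lt_right hs0 hu)
  have hstu : s * u ≤ t * u := mul_le_mul_of_nonneg_right hst hu0.le
  refine le_of_mul_le_mul_left ?_ (Real.rpow_pos_of_pos hu0 p)
  calc u ^ p * (s ^ p * φ (s * u)) = (s * u) ^ p * φ (s * u) := by
        rw [Real.mul_rpow hs0.le hu0.le]; ring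
    _ ≤ (t * u) ^ p * φ (t * u) := hφ_mono hsu (hsu.trans_le hstu) hstu
    _ = u ^ p * (t ^ p * φ (t * u)) := by rw [Real.mul_rpow ht0.le hu0.le]; ring

theorem monotoneOn_rpow_mul_integral_Ioi {φ : ℝ → ℝ} (hc : 0 < c)
    (hφ_int : IntegrableOn (fun a => a⁻¹ * φ a) (Ioi c))
    (hφ_mono : MonotoneOn (fun t => t ^ p * φ t) (Ioi c)) :
    MonotoneOn (fun t => t ^ p * ∫ a in Ioi t, a⁻¹ * φ a) (Ici c) := by
  have rescale : ∀ t ∈ Ici c,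
      t ^ p * ∫ a in Ioi t, a⁻¹ * φ a = ∫ u in Ioi 1, t ^ p * (u⁻¹ * φ (t * u)) := by
    intro t ht
    have scaling := integral_inv_smul_comp_mul_left_Ioi φ 1 (hc.trans_le ht)
    simp only [smul_eq_mul, mul_one] at scaling
    rw [integral_const_mul, scaling]
  have rescale_integrable : ∀ t ∈ Ici c,
      IntegrableOn (fun u => t ^ p * (u⁻¹ * φ (t * u))) (Ioi 1) := by
    intro t ht
    have scaling := integrableOn_Ioi_inv_smul_comp_mul_left_iff φ 1 (hc.trans_le ht)
    simp only [smul_eq_mul, mul_one] at scaling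
    exact (scaling.2 (hφ_int.mono_set (Ioi_subset_Ioi ht))).const_mul _
  intro s hs t ht hst
  simp only [rescale s hs, rescale t ht]
  refine setIntegral_mono_on (rescale_integrable s hs) (rescale_integrable t ht)
    measurableSet_Ioi fun u hu => ?_
  rw [mul_left_comm, mul_left_comm (t ^ p)]
  exact mul_le_mul_of_nonneg_left (rpow_mul_comp_mul_right_le hc hφ_mono hs hst hu)
    (inv_nonneg.2 (zero_le_one.trans (le_of_lt hu)))

theorem antitoneOn_g_div_sqrt_general {f : ℝ → ℝ} (hc : 0 < c)
    (hf_pos : ∀ t ∈ Ioi c, 0 < f t)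
    (hf_int : IntegrableOn (fun a => 1 / (a * f a)) (Ioi c))
    (hf_anti : AntitoneOn (fun t => f t / t ^ p) (Ioi c)) :
    AntitoneOn (fun t => (∫ a in Ioi t, 1 / (a * f a))⁻¹ / t ^ p) (Ici c) := by
  have inv_mono : MonotoneOn (fun t => t ^ p * (f t)⁻¹) (Ioi c) := by
    intro s hs t ht hst
    have h_pos : 0 < f t / t ^ p := div_pos (hf_pos t ht) (Real.rpow_pos_of_pos (hc.trans ht) p)
    simpa only [inv_div, ← div_eq_mul_inv] using inv_anti₀ h_pos (hf_anti hs ht hst)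
  have tail_pos : ∀ t ∈ Ici c, 0 < ∫ a in Ioi t, 1 / (a * f a) := fun t ht =>
    setIntegral_pos_of_forall_pos measurableSet_Ioi (isOpen_Ioi.measure_ne_zero _ nonempty_Ioi)
      (hf_int.mono_set (Ioi_subset_Ioi ht)) fun a ha =>
      have hac : c < a := lt_of_le_of_lt ht ha
      one_div_pos.2 (mul_pos (hc.trans hac) (hf_pos a hac))
  simp only [one_div, mul_inv] at hf_int tail_pos ⊢
  intro s hs t ht hst
  have h_pos : 0 < s ^ p * ∫ a in Ioi s, a⁻¹ * (f a)⁻¹ :=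
    mul_pos (Real.rpow_pos_of_pos (hc.trans_le hs) p) (tail_pos s hs)
  simpa only [mul_inv_rev, div_eq_mul_inv] using
    inv_anti₀ h_pos (monotoneOn_rpow_mul_integral_Ioi hc hf_int inv_mono hs ht hst)

end Tail

/-- Lemma 2.3 (iv) ingredient: if `f : [1,∞) → [1,∞)` is continuous, increasing, has
finite tail integrals and `f(t)/t^{1/2}` is decreasing, then with
`g(t) := (∫_t^∞ da/(a f(a)))⁻¹` the function `g(t)/t^{1/2}` is decreasing on `(1,∞)`. -/
theorem antitoneOn_g_div_sqrt (f : ℝ → ℝ)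
    (hf_cont : ContinuousOn f (Set.Ici 1))
    (hf_mono : MonotoneOn f (Set.Ici 1))
    (hf_ge : ∀ t ≥ (1 : ℝ), 1 ≤ f t)
    (hf_int : ∀ t ≥ (1 : ℝ), IntegrableOn (fun a => 1 / (a * f a)) (Set.Ioi t))
    (hf_anti : AntitoneOn (fun t => f t / t ^ ((1 : ℝ) / 2)) (Set.Ici 1)) :
    AntitoneOn (fun t => (∫ a in Set.Ioi t, 1 / (a * f a))⁻¹ / t ^ ((1 : ℝ) / 2))
      (Set.Ioi 1) :=
  (antitoneOn_g_div_sqrt_general one_pos (fun t ht => one_pos.trans_le (hf_ge t (le_of_lt ht)))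
    (hf_int 1 le_rfl) (hf_anti.mono Ioi_subset_Ici_self)).mono Ioi_subset_Ici_self
end

section
/- Let n ≥ 1, let R ≥ 1 and C > 0, let g : (0,∞) → (0,∞) satisfy g(t) ≤ t^{1/2} for all t > 0, let 0 < α ≤ 1, let X ⊆ ℂⁿ with |z| ≤ R for all z ∈ X, let ζ ∈ ℂⁿ with |ζ| ≤ R, and let ρ : X → ℝ satisfy ρ ≤ 0 on X and |ρ(z) − ρ(z')| ≤ C·g(|z − z'|^{-1})^{-2} for all distinct z, z' ∈ X. Then for all distinct z, z' ∈ X one has |(−2ρ(z) + |z − ζ|²)^{α/2} − (−2ρ(z') + |z' − ζ|²)^{α/2}| ≤ (2C + 4R)^{α/2} · g(|z − z'|^{-1})^{-α}. -/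
/-!
The map `t ↦ t ^ (α / 2)` is `α / 2`-Hölder on `[0, ∞)` with constant one, so it suffices that
`-2 * ρ + |· - ζ|²` be `g²`-Hölder. The squared distance to `ζ` is Lipschitz on bounded sets, and
`g t ≤ t ^ (1 / 2)` at `t = 1 / d` says exactly that the Lipschitz modulus `d` is
dominated by `g (1 / d)⁻²`.
-/

theorem abs_rpow_sub_rpow_le_rpow_abs_sub {x y p : ℝ} (hx : 0 ≤ x) (hy : 0 ≤ y) (hp : 0 ≤ p)
    (hp1 : p ≤ 1) : |x ^ p - y ^ p| ≤ |x - y| ^ p := by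
  wlog hxy : y ≤ x generalizing x y
  · rw [abs_sub_comm, abs_sub_comm x]
    exact this hy hx (le_of_not_ge hxy)
  rw [abs_of_nonneg (sub_nonneg.2 (Real.rpow_le_rpow hy hxy hp)),
    abs_of_nonneg (sub_nonneg.2 hxy), sub_le_iff_le_add]
  simpa only [sub_add_cancel] using Real.rpow_add_le_add_rpow (sub_nonneg.2 hxy) hy hp hp1

theorem abs_rpow_half_sub_rpow_half_le_of_abs_sub_le {x y K m α : ℝ} (hx : 0 ≤ x)
    (hy : 0 ≤ y) (hm : 0 < m) (hα : α ∈ Set.Icc (0 : ℝ) 2) (hxy : |x - y| ≤ K * m ^ 2) :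
    |x ^ (α / 2) - y ^ (α / 2)| ≤ K ^ (α / 2) * m ^ α := by
  obtain ⟨hα0, hα2⟩ := hα
  have hK : 0 ≤ K := nonneg_of_mul_nonneg_left ((abs_nonneg _).trans hxy) (by positivity)
  calc |x ^ (α / 2) - y ^ (α / 2)|
      ≤ |x - y| ^ (α / 2) :=
        abs_rpow_sub_rpow_le_rpow_abs_sub hx hy (by linarith) (by linarith)
    _ ≤ (K * m ^ 2) ^ (α / 2) := by gcongr
    _ = K ^ (α / 2) * m ^ α := by
      rw [Real.mul_rpow hK (by positivity), ← Real.rpow_natCast_mul hm.le, Nat.cast_ofNat,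
        mul_div_cancel₀ α two_ne_zero]

theorem abs_dist_sq_sub_dist_sq_le {E : Type*} [PseudoMetricSpace E] {x y c : E} {D : ℝ}
    (hx : dist x c ≤ D) (hy : dist y c ≤ D) :
    |dist x c ^ 2 - dist y c ^ 2| ≤ 2 * D * dist x y := by
  rw [sq_sub_sq, abs_mul, abs_of_nonneg (by positivity)]
  exact mul_le_mul (by linarith) (abs_dist_sub_le x y c) (abs_nonneg _)
    (by linarith [dist_nonneg (x := x) (y := c)])

theorem le_inv_sq_of_le_sqrt_inv {d a : ℝ} (ha : 0 < a) (had : a ≤ √d⁻¹) : d ≤ a⁻¹ ^ 2 := by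
  have hd : 0 < d := inv_pos.1 (Real.sqrt_pos.1 (ha.trans_le had))
  rw [Real.sqrt_inv, le_inv_comm₀ ha (Real.sqrt_pos.2 hd)] at had
  exact (Real.sqrt_le_left (inv_nonneg.2 ha.le)).1 had

theorem barrier_g_alpha_holder_general {E : Type*} [MetricSpace E] {R C α : ℝ} {g : ℝ → ℝ}
    (hg_pos : ∀ t > (0 : ℝ), 0 < g t) (hg_le : ∀ t > (0 : ℝ), g t ≤ t ^ ((1 : ℝ) / 2))
    (hα : α ∈ Set.Icc (0 : ℝ) 2) {X : Set E} {ζ : E} (hX : ∀ z ∈ X, dist z ζ ≤ 2 * R)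
    {ρ : E → ℝ} (hρ_nonpos : ∀ z ∈ X, ρ z ≤ 0)
    (hρ_holder : ∀ z ∈ X, ∀ z' ∈ X, z ≠ z' →
      |ρ z - ρ z'| ≤ C * ((g (dist z z')⁻¹)⁻¹) ^ 2) :
    ∀ z ∈ X, ∀ z' ∈ X, z ≠ z' →
      |(-2 * ρ z + dist z ζ ^ 2) ^ (α / 2) - (-2 * ρ z' + dist z' ζ ^ 2) ^ (α / 2)|
        ≤ (2 * C + 4 * R) ^ (α / 2) * ((g (dist z z')⁻¹)⁻¹) ^ α := by
  intro z hz z' hz' hne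
  have hdist : 0 < (dist z z')⁻¹ := inv_pos.2 (dist_pos.2 hne)
  have hg : 0 < g (dist z z')⁻¹ := hg_pos _ hdist
  have hρ := hρ_holder z hz z' hz' hne
  have dist_le_modulus : dist z z' ≤ (g (dist z z')⁻¹)⁻¹ ^ 2 :=
    le_inv_sq_of_le_sqrt_inv hg (by simpa only [Real.sqrt_eq_rpow] using hg_le _ hdist)
  set m := (g (dist z z')⁻¹)⁻¹
  have hR : 0 ≤ 2 * R := dist_nonneg.trans (hX z hz)
  have base_nonneg : ∀ w ∈ X, 0 ≤ -2 * ρ w + dist w ζ ^ 2 := fun w hw ↦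
    add_nonneg (by linarith [hρ_nonpos w hw]) (sq_nonneg _)
  refine abs_rpow_half_sub_rpow_half_le_of_abs_sub_le (base_nonneg z hz) (base_nonneg z' hz')
    (inv_pos.2 hg) hα ?_
  calc |-2 * ρ z + dist z ζ ^ 2 - (-2 * ρ z' + dist z' ζ ^ 2)|
      = |-2 * (ρ z - ρ z') + (dist z ζ ^ 2 - dist z' ζ ^ 2)| := by ring_nf
    _ ≤ 2 * |ρ z - ρ z'| + |dist z ζ ^ 2 - dist z' ζ ^ 2| := by
      simpa only [abs_mul, abs_neg, Nat.abs_ofNat] using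
        abs_add_le (-2 * (ρ z - ρ z')) (dist z ζ ^ 2 - dist z' ζ ^ 2)
    _ ≤ 2 * (C * m ^ 2) + 2 * (2 * R) * dist z z' := by
      gcongr
      exact abs_dist_sq_sub_dist_sq_le (hX z hz) (hX z' hz')
    _ ≤ 2 * (C * m ^ 2) + 2 * (2 * R) * m ^ 2 := by gcongr
    _ = (2 * C + 4 * R) * m ^ 2 := by ring

/-- Core of Proposition 3.1 (ii): if `ρ ≤ 0` is `g²`-Hölder on a bounded set
`X ⊆ ℂⁿ` (with `g(t) ≤ t^{1/2}`), then `z ↦ (−2ρ(z) + |z − ζ|²)^{α/2}` is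
`g^α`-Hölder, uniformly in `ζ`. -/
theorem barrier_g_alpha_holder (n : ℕ) (hn : 1 ≤ n) (R C : ℝ) (hR : 1 ≤ R) (hC : 0 < C)
    (g : ℝ → ℝ) (hg_pos : ∀ t > (0 : ℝ), 0 < g t)
    (hg_le : ∀ t > (0 : ℝ), g t ≤ t ^ ((1 : ℝ) / 2))
    (α : ℝ) (hα : α ∈ Set.Ioc (0 : ℝ) 1)
    (X : Set (EuclideanSpace ℂ (Fin n))) (hX : ∀ z ∈ X, ‖z‖ ≤ R)
    (ζ : EuclideanSpace ℂ (Fin n)) (hζ : ‖ζ‖ ≤ R)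
    (ρ : EuclideanSpace ℂ (Fin n) → ℝ) (hρ_nonpos : ∀ z ∈ X, ρ z ≤ 0)
    (hρ_holder : ∀ z ∈ X, ∀ z' ∈ X, z ≠ z' →
      |ρ z - ρ z'| ≤ C * ((g ‖z - z'‖⁻¹)⁻¹) ^ 2) :
    ∀ z ∈ X, ∀ z' ∈ X, z ≠ z' →
      |(-2 * ρ z + ‖z - ζ‖ ^ 2) ^ (α / 2) - (-2 * ρ z' + ‖z' - ζ‖ ^ 2) ^ (α / 2)|
        ≤ (2 * C + 4 * R) ^ (α / 2) * ((g ‖z - z'‖⁻¹)⁻¹) ^ α := by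
  simp only [← dist_eq_norm] at hρ_holder ⊢
  exact barrier_g_alpha_holder_general hg_pos hg_le ⟨hα.1.le, hα.2.trans one_le_two⟩
    (fun z hz ↦ (dist_le_norm_add_norm z ζ).trans (by linarith [hX z hz])) hρ_nonpos hρ_holder
end
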